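/- Let 𝒳, 𝒴 ⊂ ℝ^d be compact sets and let u : ℝ^d → ℝ be 1-Lipschitz with respect to the Euclidean norm. Suppose x ∈ 𝒳, y ∈ 𝒴, x ≠ y and u(x) − u(y) = ‖x−y‖. Then there exists a maximal transport ray containing x and y: that is, a closed segment [a,b] with a ∈ 𝒳, b ∈ 𝒴 and u(a) − u(b) = ‖a−b‖ such that [x,y] ⊆ [a,b], and such that no closed segment [a',b'] with a' ∈ 𝒳, b' ∈ 𝒴 and u(a') − u(b') = ‖a'−b'‖ strictly contains [a,b]. -/

import Mathlib

open MeasureTheory Metric Filter Topology Set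

noncomputable section

/-- `ℝ^d` with the Euclidean norm. -/
abbrev Euc (d : ℕ) := EuclideanSpace ℝ (Fin d)

/-!
The contact pairs `(a, b)` whose segment contains `[x, y]` form a compact set, so one of them has
greatest length. Any contact segment containing `[a, b]` also contains `[x, y]`, so it is no longer
than `[a, b]`, and a segment that contains another one without being longer is equal to it.
-/

section TopologicalVectorSpace

variable {E : Type*} [AddCommGroup E] [Module ℝ E] [TopologicalSpace E] [ContinuousAdd E]
  [ContinuousSMul ℝ E] [T2Space E]

lemma isClosed_setOf_mem_segment (x : E) : IsClosed {p : E × E | x ∈ segment ℝ p.1 p.2} := by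
  have h_closed : IsClosed {q : Icc (0 : ℝ) 1 × (E × E) |
      (1 - q.1 : ℝ) • q.2.1 + (q.1 : ℝ) • q.2.2 = x} := isClosed_eq (by fun_prop) (by fun_prop)
  convert isClosedMap_snd_of_compactSpace _ h_closed using 1
  ext p
  simp [segment_eq_image]

lemma isClosed_setOf_segment_subset_segment (x y : E) :
    IsClosed {p : E × E | segment ℝ x y ⊆ segment ℝ p.1 p.2} := by
  have h_endpoints (p : E × E) : segment ℝ x y ⊆ segment ℝ p.1 p.2 ↔
      x ∈ segment ℝ p.1 p.2 ∧ y ∈ segment ℝ p.1 p.2 :=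
    ⟨fun h ↦ ⟨h (left_mem_segment ℝ x y), h (right_mem_segment ℝ x y)⟩,
      fun h ↦ (convex_segment p.1 p.2).segment_subset h.1 h.2⟩
  simp only [h_endpoints]
  exact (isClosed_setOf_mem_segment x).inter (isClosed_setOf_mem_segment y)

end TopologicalVectorSpace

section ContactSet

variable {E : Type*} [NormedAddCommGroup E]

/-- The contact set of `u` on `X × Y`: the pairs of endpoints of transport rays, together with
the degenerate pairs `(a, a)` with `a ∈ X ∩ Y`. -/
def contactSet (X Y : Set E) (u : E → ℝ) : Set (E × E) :=
  {p ∈ X ×ˢ Y | u p.1 - u p.2 = ‖p.1 - p.2‖}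

lemma isCompact_contactSet {X Y : Set E} {u : E → ℝ} (hX : IsCompact X) (hY : IsCompact Y)
    (huX : ContinuousOn u X) (huY : ContinuousOn u Y) : IsCompact (contactSet X Y u) := by
  have h_cont : ContinuousOn (fun p : E × E ↦ u p.1 - u p.2 - ‖p.1 - p.2‖) (X ×ˢ Y) :=
    ((huX.comp continuousOn_fst fun p hp ↦ hp.1).sub
      (huY.comp continuousOn_snd fun p hp ↦ hp.2)).sub (by fun_prop)
  have h_closed := h_cont.preimage_isClosed_of_isClosed (hX.prod hY).isClosed isClosed_singleton
    (t := {0})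
  refine (hX.prod hY).of_isClosed_subset ?_ (sep_subset _ _)
  convert h_closed using 1
  ext p
  simp [contactSet, sub_eq_zero]

end ContactSet

section NormedSpace

variable {E : Type*} [NormedAddCommGroup E] [NormedSpace ℝ E]

lemma segment_eq_segment_of_subset_of_dist_le {a b c d : E}
    (h_sub : segment ℝ a b ⊆ segment ℝ c d) (h_dist : dist c d ≤ dist a b) :
    segment ℝ a b = segment ℝ c d := by
  rcases eq_or_ne c d with rfl | hcd
  · rw [segment_same] at h_sub ⊢
    exact (Set.Nonempty.subset_singleton_iff ⟨a, left_mem_segment ℝ a b⟩).1 h_sub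
  have ha : a ∈ segment ℝ c d := h_sub (left_mem_segment ℝ a b)
  have hb : b ∈ segment ℝ c d := h_sub (right_mem_segment ℝ a b)
  rw [segment_eq_image_lineMap] at ha hb
  obtain ⟨s, ⟨hs₀, hs₁⟩, rfl⟩ := ha
  obtain ⟨t, ⟨ht₀, ht₁⟩, rfl⟩ := hb
  have h_one_le : 1 ≤ |s - t| := by
    rw [dist_lineMap_lineMap, Real.dist_eq] at h_dist
    exact (le_mul_iff_one_le_left (dist_pos.2 hcd)).1 h_dist
  rcases le_abs.1 h_one_le with h | h
  · obtain ⟨rfl, rfl⟩ : s = 1 ∧ t = 0 := ⟨by linarith, by linarith⟩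
    simp [segment_symm]
  · obtain ⟨rfl, rfl⟩ : s = 0 ∧ t = 1 := ⟨by linarith, by linarith⟩
    simp

theorem exists_maximalFor_segment_of_isCompact {K : Set (E × E)} (hK : IsCompact K) {x y : E}
    (hxy : (x, y) ∈ K) :
    ∃ p : E × E, segment ℝ x y ⊆ segment ℝ p.1 p.2 ∧
      MaximalFor (· ∈ K) (fun q ↦ segment ℝ q.1 q.2) p := by
  obtain ⟨p, ⟨hpK, hp_sub⟩, hp_max⟩ :=
    (hK.inter_right (isClosed_setOf_segment_subset_segment x y)).exists_isMaxOn
      ⟨(x, y), hxy, Subset.rfl⟩ (f := fun q ↦ dist q.1 q.2) (by fun_prop)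
  refine ⟨p, hp_sub, hpK, fun q hqK hpq ↦ ?_⟩
  have h_dist : dist q.1 q.2 ≤ dist p.1 p.2 := hp_max ⟨hqK, hp_sub.trans hpq⟩
  exact (segment_eq_segment_of_subset_of_dist_le hpq h_dist).ge

theorem stmt15_general (X Y : Set E) (hX : IsCompact X) (hY : IsCompact Y) (u : E → ℝ)
    (huX : ContinuousOn u X) (huY : ContinuousOn u Y) (x y : E) (hx : x ∈ X) (hy : y ∈ Y)
    (huxy : u x - u y = ‖x - y‖) :
    ∃ a ∈ X, ∃ b ∈ Y, u a - u b = ‖a - b‖ ∧ segment ℝ x y ⊆ segment ℝ a b ∧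
      ¬∃ a' ∈ X, ∃ b' ∈ Y, u a' - u b' = ‖a' - b'‖ ∧
        segment ℝ a b ⊆ segment ℝ a' b' ∧ segment ℝ a b ≠ segment ℝ a' b' := by
  have hxy : (x, y) ∈ contactSet X Y u := ⟨⟨hx, hy⟩, huxy⟩
  obtain ⟨⟨a, b⟩, h_sub, ⟨⟨ha, hb⟩, hab⟩, h_max⟩ :=
    exists_maximalFor_segment_of_isCompact (isCompact_contactSet hX hY huX huY) hxy
  refine ⟨a, ha, b, hb, hab, h_sub, ?_⟩
  rintro ⟨a', ha', b', hb', hab', h_sub', h_ne⟩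
  have hab'_mem : (a', b') ∈ contactSet X Y u := ⟨⟨ha', hb'⟩, hab'⟩
  exact h_ne (h_sub'.antisymm (h_max hab'_mem h_sub'))

end NormedSpace

/-- Every pair `(x,y) ∈ 𝒳 × 𝒴` with `x ≠ y` in the contact set
`u(x) − u(y) = ‖x−y‖` of a 1-Lipschitz function `u` extends to a maximal transport ray. -/
theorem stmt15 {d : ℕ} (X Y : Set (Euc d)) (hX : IsCompact X) (hY : IsCompact Y)
    (u : Euc d → ℝ) (hu : LipschitzWith 1 u)
    (x y : Euc d) (hx : x ∈ X) (hy : y ∈ Y) (hxy : x ≠ y)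
    (huxy : u x - u y = ‖x - y‖) :
    ∃ a ∈ X, ∃ b ∈ Y, u a - u b = ‖a - b‖ ∧ segment ℝ x y ⊆ segment ℝ a b ∧
      ¬∃ a' ∈ X, ∃ b' ∈ Y, u a' - u b' = ‖a' - b'‖ ∧
        segment ℝ a b ⊆ segment ℝ a' b' ∧ segment ℝ a b ≠ segment ℝ a' b' :=
  stmt15_general X Y hX hY u hu.continuous.continuousOn hu.continuous.continuousOn x y hx hy huxy
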